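/- There exists a global minimizer (u*, v*) of f such that ‖u*‖_∞ ≤ R and ‖v*‖_∞ ≤ R, where R = η^{-1}‖C‖_∞ + log n − 2 log(min_{1≤i,j≤n}{r_i, c_j}). -/

import Mathlib

open Finset

/-- ℓ∞-norm of a vector in ℝ^n. -/
noncomputable def infNorm {n : ℕ} (u : Fin n → ℝ) : ℝ := ⨆ i, |u i|

/-- ℓ∞-norm of a matrix: the maximum entry (entries are nonnegative). -/
noncomputable def matSup {n : ℕ} (C : Fin n → Fin n → ℝ) : ℝ := ⨆ i, ⨆ j, C i j

/-- min_{1 ≤ i, j ≤ n} { r_i, c_j }. -/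
noncomputable def minrc {n : ℕ} (r c : Fin n → ℝ) : ℝ := min (⨅ i, r i) (⨅ j, c j)

/-- The matrix B(u,v) with entries exp(u_i + v_j - C_ij/η). -/
noncomputable def Bmat {n : ℕ} (η : ℝ) (C : Fin n → Fin n → ℝ) (u v : Fin n → ℝ)
    (i j : Fin n) : ℝ := Real.exp (u i + v j - C i j / η)

/-- Dual objective f(u,v) = Σ_{ij} B(u,v)_{ij} - ⟨u,r⟩ - ⟨v,c⟩. -/
noncomputable def dualObj {n : ℕ} (η : ℝ) (C : Fin n → Fin n → ℝ) (r c : Fin n → ℝ)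
    (u v : Fin n → ℝ) : ℝ :=
  (∑ i, ∑ j, Bmat η C u v i j) - (∑ i, u i * r i) - (∑ j, v j * c j)

/-! The dual objective is unchanged by `(u, v) ↦ (u + t, v - t)`, and for fixed `v` it is minimized
in `u` by the closed-form Sinkhorn half-step. Starting from any `(u, v)`, translate so that
`∑ⱼ exp vⱼ = 1`, then update `u`, then `v`. The objective does not increase, and since the scaled
cost lies in `[0, K]` each new potential is within `K` of `log r`, respectively `log c`. So every
point is dominated by a point of a fixed box, and a minimizer over the box is global. -/

lemma exists_mem_forall_le_of_isCompact {X α : Type*} [TopologicalSpace X] [Nonempty X]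
    [LinearOrder α] [TopologicalSpace α] [ClosedIicTopology α] {f : X → α} {s : Set X}
    (hs : IsCompact s) (hf : ContinuousOn f s) (hdom : ∀ x, ∃ y ∈ s, f y ≤ f x) :
    ∃ x ∈ s, ∀ y, f x ≤ f y := by
  obtain ⟨y₀, hy₀, -⟩ := hdom (Classical.arbitrary X)
  obtain ⟨x, hx, hmin⟩ := hs.exists_isMinOn ⟨y₀, hy₀⟩ hf
  refine ⟨x, hx, fun y => ?_⟩
  obtain ⟨y', hy', hle⟩ := hdom y
  exact (isMinOn_iff.1 hmin y' hy').trans hle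

lemma exp_mul_sub_mul_log_sub_log_le {a S : ℝ} (ha : 0 < a) (hS : 0 < S) (x : ℝ) :
    Real.exp (Real.log a - Real.log S) * S - (Real.log a - Real.log S) * a
      ≤ Real.exp x * S - x * a := by
  set y := Real.log a - Real.log S with hy
  have hSy : Real.exp y * S = a := by
    rw [hy, Real.exp_sub, Real.exp_log ha, Real.exp_log hS, div_mul_cancel₀ _ hS.ne']
  have hSx : Real.exp x * S = a * Real.exp (x - y) := by
    rw [← hSy, mul_right_comm, ← Real.exp_add, add_sub_cancel]
  have htangent : a * (x - y + 1) ≤ a * Real.exp (x - y) :=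
    mul_le_mul_of_nonneg_left (Real.add_one_le_exp _) ha.le
  rw [hSy, hSx]
  linarith

section Entropic

variable {ι κ : Type*} [Fintype κ]

lemma sum_exp_pos [Nonempty κ] (w : κ → ℝ) : 0 < ∑ j, Real.exp (w j) :=
  sum_pos (fun _ _ => Real.exp_pos _) univ_nonempty

/-- The log-sum-exp functional `log ∑ⱼ exp wⱼ`, the logarithm of the normalizing constant in a
Sinkhorn half-step. -/
noncomputable def logSumExp (w : κ → ℝ) : ℝ := Real.log (∑ j, Real.exp (w j))

lemma logSumExp_mono [Nonempty κ] {w w' : κ → ℝ} (h : ∀ j, w j ≤ w' j) :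
    logSumExp w ≤ logSumExp w' :=
  Real.log_le_log (sum_exp_pos w) (sum_le_sum fun j _ => Real.exp_le_exp.2 (h j))

lemma logSumExp_sub_const [Nonempty κ] (w : κ → ℝ) (t : ℝ) :
    logSumExp (fun j => w j - t) = logSumExp w - t := by
  simp only [logSumExp, Real.exp_sub, ← sum_div]
  rw [Real.log_div (sum_exp_pos w).ne' (Real.exp_ne_zero t), Real.log_exp]

lemma logSumExp_log {a : κ → ℝ} (ha : ∀ j, 0 < a j) :
    logSumExp (fun j => Real.log (a j)) = Real.log (∑ j, a j) := by
  simp only [logSumExp, Real.exp_log (ha _)]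

lemma logSumExp_sub_mem_Icc [Nonempty κ] (w : κ → ℝ) {d : κ → ℝ} {K : ℝ}
    (hd : ∀ j, d j ∈ Set.Icc 0 K) :
    logSumExp (fun j => w j - d j) ∈ Set.Icc (logSumExp w - K) (logSumExp w) :=
  ⟨logSumExp_sub_const w K ▸ logSumExp_mono fun j => sub_le_sub_left (hd j).2 _,
    logSumExp_mono fun j => sub_le_self _ (hd j).1⟩

/-- The Sinkhorn half-step: for `r > 0`, the row potential `u` for which `exp (uᵢ + vⱼ - Dᵢⱼ)` has
row sums `r`. The column half-step is the same operation for the transposed cost. -/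
noncomputable def sinkhornUpdate (D : ι → κ → ℝ) (r : ι → ℝ) (v : κ → ℝ) (i : ι) : ℝ :=
  Real.log (r i) - logSumExp (fun j => v j - D i j)

variable {D : ι → κ → ℝ} {r : ι → ℝ} {c : κ → ℝ} {K : ℝ}

lemma sinkhornUpdate_mem_Icc [Nonempty κ] (hD : ∀ i j, D i j ∈ Set.Icc 0 K) (r : ι → ℝ)
    (v : κ → ℝ) (i : ι) :
    sinkhornUpdate D r v i ∈
      Set.Icc (Real.log (r i) - logSumExp v) (Real.log (r i) - logSumExp v + K) := by
  obtain ⟨hlower, hupper⟩ := logSumExp_sub_mem_Icc v (hD i)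
  unfold sinkhornUpdate
  constructor <;> linarith

variable [Fintype ι]

/-- The dual objective of entropic optimal transport between `r` and `c`, for the scaled cost
`D = C / η`. The two index types are allowed to differ, so that exchanging the roles of rows and
columns is again an instance. -/
noncomputable def entropicDual (D : ι → κ → ℝ) (r : ι → ℝ) (c : κ → ℝ) (u : ι → ℝ)
    (v : κ → ℝ) : ℝ :=
  (∑ i, ∑ j, Real.exp (u i + v j - D i j)) - (∑ i, u i * r i) - ∑ j, v j * c j

lemma continuous_entropicDual (D : ι → κ → ℝ) (r : ι → ℝ) (c : κ → ℝ) :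
    Continuous fun p : (ι → ℝ) × (κ → ℝ) => entropicDual D r c p.1 p.2 := by
  unfold entropicDual
  fun_prop

lemma entropicDual_swap (D : ι → κ → ℝ) (r : ι → ℝ) (c : κ → ℝ) (u : ι → ℝ) (v : κ → ℝ) :
    entropicDual (fun j i => D i j) c r v u = entropicDual D r c u v := by
  unfold entropicDual
  rw [sum_comm, sub_right_comm]
  simp only [add_comm]

lemma entropicDual_add_sub_const (D : ι → κ → ℝ) (h : ∑ i, r i = ∑ j, c j) (u : ι → ℝ)
    (v : κ → ℝ) (t : ℝ) :
    entropicDual D r c (fun i => u i + t) (fun j => v j - t) = entropicDual D r c u v := by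
  simp only [entropicDual, add_add_sub_cancel, add_mul, sub_mul, sum_add_distrib,
    sum_sub_distrib, ← mul_sum, h]
  ring

lemma entropicDual_eq_sum_rows (D : ι → κ → ℝ) (r : ι → ℝ) (c : κ → ℝ) (u : ι → ℝ)
    (v : κ → ℝ) :
    entropicDual D r c u v =
      (∑ i, (Real.exp (u i) * (∑ j, Real.exp (v j - D i j)) - u i * r i)) - ∑ j, v j * c j := by
  simp only [entropicDual, sum_sub_distrib, mul_sum, ← Real.exp_add, add_sub_assoc]

lemma entropicDual_sinkhornUpdate_le [Nonempty κ] (D : ι → κ → ℝ) (hr : ∀ i, 0 < r i)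
    (c : κ → ℝ) (u : ι → ℝ) (v : κ → ℝ) :
    entropicDual D r c (sinkhornUpdate D r v) v ≤ entropicDual D r c u v := by
  rw [entropicDual_eq_sum_rows, entropicDual_eq_sum_rows]
  exact sub_le_sub_right (sum_le_sum fun i _ =>
    exp_mul_sub_mul_log_sub_log_le (hr i) (sum_exp_pos _) (u i)) _

lemma logSumExp_sinkhornUpdate_mem_Icc [Nonempty ι] [Nonempty κ]
    (hD : ∀ i j, D i j ∈ Set.Icc 0 K) (hr : ∀ i, 0 < r i) (v : κ → ℝ) :
    logSumExp (sinkhornUpdate D r v) ∈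
      Set.Icc (Real.log (∑ i, r i) - logSumExp v) (Real.log (∑ i, r i) - logSumExp v + K) := by
  set a : ι → ℝ := fun i => Real.log (r i) - logSumExp v with ha
  have hlog : logSumExp a = Real.log (∑ i, r i) - logSumExp v := by
    rw [ha, logSumExp_sub_const, logSumExp_log hr]
  have hexcess : ∀ i, sinkhornUpdate D r v i - a i ∈ Set.Icc 0 K := fun i =>
    have h := sinkhornUpdate_mem_Icc hD r v i
    ⟨sub_nonneg.2 h.1, sub_le_iff_le_add'.2 h.2⟩
  have hmem := logSumExp_sub_mem_Icc (sinkhornUpdate D r v) hexcess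
  simp only [sub_sub_cancel, hlog] at hmem
  exact ⟨hmem.2, sub_le_iff_le_add.1 hmem.1⟩

lemma nonempty_of_sum_eq_one (h : ∑ i, r i = 1) : Nonempty ι :=
  univ_nonempty_iff.1 (nonempty_of_sum_ne_zero (h ▸ one_ne_zero))

lemma log_nonpos_of_sum_eq_one (hr : ∀ i, 0 ≤ r i) (h : ∑ i, r i = 1) (i : ι) :
    Real.log (r i) ≤ 0 :=
  Real.log_nonpos (hr i) (h ▸ single_le_sum (fun k _ => hr k) (mem_univ i))

lemma norm_le_sub_log_of_mem_Icc {m : ℝ} (hm : 0 < m) (hr : ∀ i, m ≤ r i) (h : ∑ i, r i = 1)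
    {w : ι → ℝ} (hw : ∀ i, w i ∈ Set.Icc (Real.log (r i) - K) (Real.log (r i) + K)) :
    ‖w‖ ≤ K - Real.log m := by
  have : Nonempty ι := nonempty_of_sum_eq_one h
  refine (pi_norm_le_iff_of_nonempty _).2 fun i => abs_le.2 ?_
  have hlog_ge : Real.log m ≤ Real.log (r i) := Real.log_le_log hm (hr i)
  have hlog_le : Real.log (r i) ≤ 0 :=
    log_nonpos_of_sum_eq_one (fun k => hm.le.trans (hr k)) h i
  constructor <;> linarith [(hw i).1, (hw i).2]

lemma exists_logSumExp_eq_zero_entropicDual_eq [Nonempty κ] (D : ι → κ → ℝ)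
    (h : ∑ i, r i = ∑ j, c j) (u : ι → ℝ) (v : κ → ℝ) :
    ∃ u' v', logSumExp v' = 0 ∧ entropicDual D r c u' v' = entropicDual D r c u v :=
  ⟨fun i => u i + logSumExp v, fun j => v j - logSumExp v,
    by rw [logSumExp_sub_const, sub_self], entropicDual_add_sub_const D h u v _⟩

lemma exists_entropicDual_le_norm_le {m : ℝ} (hD : ∀ i j, D i j ∈ Set.Icc 0 K) (hm : 0 < m)
    (hr : ∀ i, m ≤ r i) (hc : ∀ j, m ≤ c j) (hr1 : ∑ i, r i = 1) (hc1 : ∑ j, c j = 1)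
    (u : ι → ℝ) (v : κ → ℝ) :
    ∃ u' v', ‖u'‖ ≤ K - Real.log m ∧ ‖v'‖ ≤ K - Real.log m ∧
      entropicDual D r c u' v' ≤ entropicDual D r c u v := by
  have : Nonempty ι := nonempty_of_sum_eq_one hr1
  have : Nonempty κ := nonempty_of_sum_eq_one hc1
  have hr0 : ∀ i, 0 < r i := fun i => hm.trans_le (hr i)
  have hc0 : ∀ j, 0 < c j := fun j => hm.trans_le (hc j)
  obtain ⟨u₁, v₁, hv₁, heq⟩ :=
    exists_logSumExp_eq_zero_entropicDual_eq D (hr1.trans hc1.symm) u v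
  set u₂ := sinkhornUpdate D r v₁
  set v₂ := sinkhornUpdate (fun j i => D i j) c u₂
  have hu₂ : ∀ i, u₂ i ∈ Set.Icc (Real.log (r i)) (Real.log (r i) + K) := by
    simpa only [hv₁, sub_zero] using sinkhornUpdate_mem_Icc hD r v₁
  have hlse : logSumExp u₂ ∈ Set.Icc 0 K := by
    simpa only [hr1, Real.log_one, hv₁, sub_zero, zero_add] using
      logSumExp_sinkhornUpdate_mem_Icc hD hr0 v₁
  have hK : 0 ≤ K := hlse.1.trans hlse.2
  have hv₂ : ∀ j, v₂ j ∈ Set.Icc (Real.log (c j) - K) (Real.log (c j) + K) := fun j =>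
    Set.Icc_subset_Icc (by linarith [hlse.2]) (by linarith [hlse.1])
      (sinkhornUpdate_mem_Icc (fun j i => hD i j) c u₂ j)
  refine ⟨u₂, v₂, norm_le_sub_log_of_mem_Icc hm hr hr1 fun i =>
      Set.Icc_subset_Icc_left (sub_le_self _ hK) (hu₂ i),
    norm_le_sub_log_of_mem_Icc hm hc hc1 hv₂, ?_⟩
  calc entropicDual D r c u₂ v₂
      = entropicDual (fun j i => D i j) c r v₂ u₂ := (entropicDual_swap D r c u₂ v₂).symm
    _ ≤ entropicDual (fun j i => D i j) c r v₁ u₂ := entropicDual_sinkhornUpdate_le _ hc0 r v₁ u₂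
    _ = entropicDual D r c u₂ v₁ := entropicDual_swap D r c u₂ v₁
    _ ≤ entropicDual D r c u₁ v₁ := entropicDual_sinkhornUpdate_le D hr0 c u₁ v₁
    _ = entropicDual D r c u v := heq

theorem stmt3_general {m : ℝ} (hD : ∀ i j, D i j ∈ Set.Icc 0 K) (hm : 0 < m)
    (hr : ∀ i, m ≤ r i) (hc : ∀ j, m ≤ c j) (hr1 : ∑ i, r i = 1) (hc1 : ∑ j, c j = 1) :
    ∃ us vs, (∀ u v, entropicDual D r c us vs ≤ entropicDual D r c u v) ∧
      ‖us‖ ≤ K - Real.log m ∧ ‖vs‖ ≤ K - Real.log m := by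
  obtain ⟨⟨us, vs⟩, hmem, hmin⟩ := exists_mem_forall_le_of_isCompact
    (isCompact_closedBall (0 : (ι → ℝ) × (κ → ℝ)) (K - Real.log m))
    (continuous_entropicDual D r c).continuousOn fun ⟨u, v⟩ => by
      obtain ⟨u', v', hu', hv', hle⟩ := exists_entropicDual_le_norm_le hD hm hr hc hr1 hc1 u v
      exact ⟨(u', v'), mem_closedBall_zero_iff.2 (norm_prod_le_iff.2 ⟨hu', hv'⟩), hle⟩
  exact ⟨us, vs, fun u v => hmin (u, v), norm_prod_le_iff.1 (mem_closedBall_zero_iff.1 hmem)⟩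

end Entropic

section FinIndexed

variable {n : ℕ}

lemma dualObj_eq_entropicDual (η : ℝ) (C : Fin n → Fin n → ℝ) (r c u v : Fin n → ℝ) :
    dualObj η C r c u v = entropicDual (fun i j => C i j / η) r c u v := rfl

lemma infNorm_le_norm (u : Fin n → ℝ) : infNorm u ≤ ‖u‖ :=
  Real.iSup_le (norm_le_pi_norm u) (norm_nonneg u)

lemma le_matSup (C : Fin n → Fin n → ℝ) (i j : Fin n) : C i j ≤ matSup C :=
  (le_ciSup (Set.finite_range (C i)).bddAbove j).trans
    (le_ciSup (f := fun i => ⨆ j, C i j) (Set.finite_range _).bddAbove i)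

lemma div_mem_Icc_matSup_div {η : ℝ} (hη : 0 ≤ η) {C : Fin n → Fin n → ℝ}
    (hC : ∀ i j, 0 ≤ C i j) (i j : Fin n) : C i j / η ∈ Set.Icc 0 (matSup C / η) :=
  ⟨div_nonneg (hC i j) hη, div_le_div_of_nonneg_right (le_matSup C i j) hη⟩

lemma minrc_le_left (r c : Fin n → ℝ) (i : Fin n) : minrc r c ≤ r i :=
  (min_le_left _ _).trans (ciInf_le (Set.finite_range r).bddBelow i)

lemma minrc_le_right (r c : Fin n → ℝ) (j : Fin n) : minrc r c ≤ c j :=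
  (min_le_right _ _).trans (ciInf_le (Set.finite_range c).bddBelow j)

lemma minrc_pos [NeZero n] {r c : Fin n → ℝ} (hr : ∀ i, 0 < r i) (hc : ∀ j, 0 < c j) :
    0 < minrc r c := by
  obtain ⟨i, hi⟩ := exists_eq_ciInf_of_finite (f := r)
  obtain ⟨j, hj⟩ := exists_eq_ciInf_of_finite (f := c)
  exact lt_min (hi ▸ hr i) (hj ▸ hc j)

lemma log_minrc_nonpos [NeZero n] {r c : Fin n → ℝ} (hr : ∀ i, 0 < r i) (hc : ∀ j, 0 < c j)
    (hr1 : ∑ i, r i = 1) : Real.log (minrc r c) ≤ 0 :=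
  (Real.log_le_log (minrc_pos hr hc) (minrc_le_left r c 0)).trans
    (log_nonpos_of_sum_eq_one (fun i => (hr i).le) hr1 0)

end FinIndexed

theorem stmt3 (n : ℕ) (hn : 2 ≤ n) (η : ℝ) (hη : 0 < η)
    (C : Fin n → Fin n → ℝ) (hC : ∀ i j, 0 ≤ C i j)
    (r c : Fin n → ℝ) (hr : ∀ i, 0 < r i) (hc : ∀ j, 0 < c j)
    (hr1 : ∑ i, r i = 1) (hc1 : ∑ j, c j = 1)
    (R : ℝ)
    (hR : R = matSup C / η + Real.log (n : ℝ) - 2 * Real.log (minrc r c)) :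
    ∃ us vs : Fin n → ℝ,
      (∀ u v : Fin n → ℝ, dualObj η C r c us vs ≤ dualObj η C r c u v) ∧
      infNorm us ≤ R ∧ infNorm vs ≤ R := by
  have : NeZero n := ⟨by lia⟩
  have hradius : matSup C / η - Real.log (minrc r c) ≤ R := by
    linarith [Real.log_natCast_nonneg n, log_minrc_nonpos hr hc hr1]
  obtain ⟨us, vs, hmin, hus, hvs⟩ := stmt3_general (div_mem_Icc_matSup_div hη.le hC)
    (minrc_pos hr hc) (minrc_le_left r c) (minrc_le_right r c) hr1 hc1
  simp only [dualObj_eq_entropicDual]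
  exact ⟨us, vs, hmin, (infNorm_le_norm us).trans (hus.trans hradius),
    (infNorm_le_norm vs).trans (hvs.trans hradius)⟩
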